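/- For every integer N ≥ 1 and every θ ∈ ℝ^{2n}, the operator P_{N,θ} maps 𝒮(ℝⁿ) onto the space H_{N,θ} of quasi-periodic distributions: for every f ∈ 𝒮(ℝⁿ) the tempered distribution P_{N,θ}f belongs to H_{N,θ}, and for every ν ∈ H_{N,θ} there exists f ∈ 𝒮(ℝⁿ) with P_{N,θ}f = ν. -/

import Mathlib

open BigOperators

/-- The standard symplectic form `σ((q,p),(q',p')) = ⟨p,q'⟩ − ⟨p',q⟩` on
`ℝ^{2n} = ℝⁿ × ℝⁿ`, a point `x` being written as a pair `x = (q,p)`. -/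
def sigmaR (n : ℕ) (x y : (Fin n → ℝ) × (Fin n → ℝ)) : ℝ :=
  (∑ i : Fin n, x.2 i * y.1 i) - ∑ i : Fin n, y.2 i * x.1 i

/-- `Q((q,p)) = ⟨q,p⟩`. -/
def QR (n : ℕ) (x : (Fin n → ℝ) × (Fin n → ℝ)) : ℝ :=
  ∑ i : Fin n, x.1 i * x.2 i

/-- The Schrödinger representation operator:
`(ρ_N(x,ζ)f)(y) = ζ^N e^{2πiN(⟨p,y⟩ − ⟨q,p⟩/2)} f(y−q)` for `x = (q,p)`. -/
noncomputable def rho (n N : ℕ) (x : (Fin n → ℝ) × (Fin n → ℝ)) (ζ : ℂ)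
    (f : (Fin n → ℝ) → ℂ) : (Fin n → ℝ) → ℂ :=
  fun y => ζ ^ N * Complex.exp (2 * Real.pi * Complex.I * (N : ℂ) *
      (((∑ i : Fin n, x.2 i * y i : ℝ) : ℂ) - ((QR n x : ℝ) : ℂ) / 2)) * f (y - x.1)

/-- Coercion of an integer lattice point `w ∈ ℤ^{2n}` into `ℝ^{2n}`. -/
def castVec (n : ℕ) (w : (Fin n → ℤ) × (Fin n → ℤ)) : (Fin n → ℝ) × (Fin n → ℝ) :=
  (fun i => (w.1 i : ℝ), fun i => (w.2 i : ℝ))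

/-- The pairing of the Dirac comb `e^θ_j` against a test function:
`e^θ_j(f) = N^{−n/2} Σ_{k∈ℤⁿ} e^{−2πi⟨θ₂,k⟩} f(k + (j−θ₁)/N)`. -/
noncomputable def comb (n N : ℕ) (θ : (Fin n → ℝ) × (Fin n → ℝ)) (j : Fin n → ℤ)
    (f : (Fin n → ℝ) → ℂ) : ℂ :=
  (((N : ℝ) ^ (-(n : ℝ) / 2) : ℝ) : ℂ) *
    ∑' k : Fin n → ℤ,
      Complex.exp (-(2 * Real.pi * Complex.I) *
          ((∑ i : Fin n, θ.2 i * (k i : ℝ) : ℝ) : ℂ)) *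
        f (fun i => (k i : ℝ) + ((j i : ℝ) - θ.1 i) / N)

/-- The transformed test function defining the dual action of `ρ_N(x,ζ)` on tempered
distributions by `(ρ_N(x,ζ)ν)(f) := ν(f̃)`, namely
`f̃(z) = ζ^N e^{2πiN(⟨p,z⟩ + ⟨q,p⟩/2)} f(z+q)` for `x = (q,p)`. -/
noncomputable def rhoDualTest (n N : ℕ) (x : (Fin n → ℝ) × (Fin n → ℝ)) (ζ : ℂ)
    (f : (Fin n → ℝ) → ℂ) : (Fin n → ℝ) → ℂ :=
  fun z => ζ ^ N * Complex.exp (2 * Real.pi * Complex.I * (N : ℂ) *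
      (((∑ i : Fin n, x.2 i * z i : ℝ) : ℂ) + ((QR n x : ℝ) : ℂ) / 2)) * f (z + x.1)

open MeasureTheory

/-- The space `H_{N,θ}` of quasi-periodic tempered distributions, where the dual action of
`ρ_N(w, e^{πiQ(w)})` on a distribution `ν` is `ν ∘ (rhoT w e^{πiQ(w)})` with
`rhoT x ζ : 𝒮(ℝⁿ) → 𝒮(ℝⁿ)` the (continuous linear) test-function transform
`(rhoT x ζ f)(z) = ζ^N e^{2πiN(⟨p,z⟩+⟨q,p⟩/2)} f(z+q)`. -/
def quasiPeriodicSet (n N : ℕ)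
    (rhoT : (Fin n → ℝ) × (Fin n → ℝ) → ℂ →
      (SchwartzMap ((Fin n) → ℝ) ℂ →L[ℂ] SchwartzMap ((Fin n) → ℝ) ℂ))
    (θ : (Fin n → ℝ) × (Fin n → ℝ)) :
    Set (SchwartzMap ((Fin n) → ℝ) ℂ →L[ℂ] ℂ) :=
  {ν | ∀ w : (Fin n → ℤ) × (Fin n → ℤ), ∀ f,
      ν (rhoT (castVec n w)
          (Complex.exp (Real.pi * Complex.I * ((QR n (castVec n w) : ℝ) : ℂ))) f)
        = Complex.exp (2 * Real.pi * Complex.I *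
            ((sigmaR n θ (castVec n w) : ℝ) : ℂ)) * ν f}

/-- The pairing `⟨P_{N,θ}f, g⟩ = Σ_{w∈ℤ^{2n}} e^{−2πiσ(θ,w)} ∫ (ρ_N(w,e^{πiQ(w)})f)(y) g(y) dy`
defining the projector `P_{N,θ} : 𝒮(ℝⁿ) → 𝒮'(ℝⁿ)`. -/
noncomputable def Ppairing (n N : ℕ) (θ : (Fin n → ℝ) × (Fin n → ℝ))
    (f g : (Fin n → ℝ) → ℂ) : ℂ :=
  ∑' w : (Fin n → ℤ) × (Fin n → ℤ),
    Complex.exp (-(2 * Real.pi * Complex.I) * ((sigmaR n θ (castVec n w) : ℝ) : ℂ)) *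
      ∫ y : Fin n → ℝ,
        rho n N (castVec n w)
          (Complex.exp (Real.pi * Complex.I * ((QR n (castVec n w) : ℝ) : ℂ))) f y * g y

/-!
Put `x₀ = -θ₁/N`. The operators `ρ_N((0,p), 1)` multiply by plane waves, so a quasi-periodic `ν`
satisfies `e_{Np} ν = e_{Np}(x₀) ν` for all `p ∈ ℤⁿ`. By Poisson summation, `ν` may then be tested
against the periodization over `N⁻¹ℤⁿ` of any Schwartz function, and choosing that function to be
a bump isolating one lattice point shows that `ν = ∑ₖ c k δ_{x₀ + k/N}`. Translation by `q ∈ ℤⁿ`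
gives `c (k + Nq) = e^{-2πi⟨θ₂,q⟩} c k`, and conversely every such `c` defines an element of
`H_{N,θ}`. Poisson summation in `p` also turns `P_{N,θ} f` into such a comb, with
`c k = N⁻ⁿ ∑_q e^{-2πi⟨θ₂,q⟩} f(x₀ + k/N - q)`, and any `c` is reached by a sum of bumps carrying
the values `Nⁿ c k` at one lattice point for each class `k` modulo `N`.
-/

section

open SchwartzMap Real
open scoped FourierTransform

section SchwartzSeries

variable {κ 𝕜 E F : Type*} [NormedField 𝕜] [NormedAddCommGroup E] [NormedSpace ℝ E]
  [NormedAddCommGroup F] [NormedSpace ℝ F] [NormedSpace 𝕜 F] [SMulCommClass ℝ 𝕜 F]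

lemma norm_pow_mul_norm_tsum_iteratedFDeriv_le {h : κ → 𝓢(E, F)}
    (hs : ∀ k l, Summable fun i => SchwartzMap.seminorm 𝕜 k l (h i)) (k l : ℕ) (x : E) :
    ‖x‖ ^ k * ‖∑' i, iteratedFDeriv ℝ l (h i) x‖ ≤ ∑' i, SchwartzMap.seminorm 𝕜 k l (h i) := by
  have hsum : Summable fun i => ‖iteratedFDeriv ℝ l (h i) x‖ :=
    (hs 0 l).of_nonneg_of_le (fun _ => norm_nonneg _)
      fun i => norm_iteratedFDeriv_le_seminorm 𝕜 (h i) l x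
  calc ‖x‖ ^ k * ‖∑' i, iteratedFDeriv ℝ l (h i) x‖
      ≤ ‖x‖ ^ k * ∑' i, ‖iteratedFDeriv ℝ l (h i) x‖ := by
        gcongr
        exact norm_tsum_le_tsum_norm hsum
    _ = ∑' i, ‖x‖ ^ k * ‖iteratedFDeriv ℝ l (h i) x‖ := tsum_mul_left.symm
    _ ≤ ∑' i, SchwartzMap.seminorm 𝕜 k l (h i) :=
        (hsum.mul_left _).tsum_le_tsum (fun i => le_seminorm 𝕜 k l (h i) x) (hs k l)

variable [CompleteSpace F]

lemma iteratedFDeriv_tsum_schwartzMap {h : κ → 𝓢(E, F)}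
    (hs : ∀ k l, Summable fun i => SchwartzMap.seminorm 𝕜 k l (h i)) (l : ℕ) (x : E) :
    iteratedFDeriv ℝ l (fun y => ∑' i, h i y) x = ∑' i, iteratedFDeriv ℝ l (h i) x :=
  congrFun (iteratedFDeriv_tsum (N := ⊤) (fun i => (h i).smooth ⊤) (fun l _ => hs 0 l)
    (fun l i x _ => norm_iteratedFDeriv_le_seminorm 𝕜 (h i) l x) le_top) x

/-- The pointwise sum of a series of Schwartz functions all of whose Schwartz seminorms are
summable. -/
noncomputable def schwartzTsum (h : κ → 𝓢(E, F))
    (hs : ∀ k l, Summable fun i => SchwartzMap.seminorm 𝕜 k l (h i)) : 𝓢(E, F) where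
  toFun x := ∑' i, h i x
  smooth' := contDiff_tsum (N := ⊤) (fun i => (h i).smooth ⊤) (fun l _ => hs 0 l)
    fun l i x _ => norm_iteratedFDeriv_le_seminorm 𝕜 (h i) l x
  decay' k l := ⟨_, fun x => by
    rw [iteratedFDeriv_tsum_schwartzMap hs]
    exact norm_pow_mul_norm_tsum_iteratedFDeriv_le hs k l x⟩

variable {h : κ → 𝓢(E, F)} (hs : ∀ k l, Summable fun i => SchwartzMap.seminorm 𝕜 k l (h i))

lemma schwartzTsum_apply (x : E) : schwartzTsum h hs x = ∑' i, h i x := rfl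

lemma seminorm_schwartzTsum_le (k l : ℕ) :
    SchwartzMap.seminorm 𝕜 k l (schwartzTsum h hs) ≤ ∑' i, SchwartzMap.seminorm 𝕜 k l (h i) := by
  refine seminorm_le_bound 𝕜 k l _ (tsum_nonneg fun i => apply_nonneg _ _) fun x => ?_
  exact (congrArg (‖x‖ ^ k * ‖·‖) (iteratedFDeriv_tsum_schwartzMap hs l x)).trans_le
    (norm_pow_mul_norm_tsum_iteratedFDeriv_le hs k l x)

lemma hasSum_schwartzTsum : HasSum h (schwartzTsum h hs) := by
  rw [HasSum, (schwartz_withSeminorms 𝕜 E F).tendsto_nhds]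
  rintro ⟨k, l⟩ ε hε
  have htail := tendsto_tsum_compl_atTop_zero fun i => SchwartzMap.seminorm 𝕜 k l (h i)
  simp only [SummationFilter.unconditional_filter]
  filter_upwards [htail.eventually (gt_mem_nhds hε)] with s hsε
  have hs' : ∀ k l, Summable fun i : {i // i ∉ s} => SchwartzMap.seminorm 𝕜 k l (h i) :=
    fun k l => (hs k l).subtype _
  have hrest : ∑ i ∈ s, h i - schwartzTsum h hs =
      -schwartzTsum (fun i : {i // i ∉ s} => h i) hs' := by
    ext x
    have hx : Summable fun i => h i x :=
      .of_norm_bounded (hs 0 0) fun i => norm_le_seminorm 𝕜 (h i) x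
    simp only [sub_apply, neg_apply, sum_apply, schwartzTsum_apply,
      ← hx.sum_add_tsum_subtype_compl s]
    abel
  calc SchwartzMap.seminorm 𝕜 k l (∑ i ∈ s, h i - schwartzTsum h hs)
      = SchwartzMap.seminorm 𝕜 k l (schwartzTsum (fun i : {i // i ∉ s} => h i) hs') := by
        rw [hrest, map_neg_eq_map]
    _ ≤ ∑' i : {i // i ∉ s}, SchwartzMap.seminorm 𝕜 k l (h i) := seminorm_schwartzTsum_le hs' k l
    _ < ε := hsε

end SchwartzSeries

section Multiplication

variable {E : Type*} [NormedAddCommGroup E]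

lemma one_add_norm_le_mul (a x : E) : 1 + ‖a‖ ≤ (1 + ‖x - a‖) * (1 + ‖x‖) := by
  have htri : ‖a‖ ≤ ‖x‖ + ‖x - a‖ := by simpa using norm_sub_le x (x - a)
  nlinarith [mul_nonneg (norm_nonneg (x - a)) (norm_nonneg x)]

lemma inv_one_add_norm_sub_pow_le (a x : E) (M : ℕ) :
    ((1 + ‖x - a‖) ^ M)⁻¹ ≤ (1 + ‖x‖) ^ M * ((1 + ‖a‖) ^ M)⁻¹ := by
  rw [← div_eq_mul_inv, le_div_iff₀ (by positivity), inv_mul_le_iff₀ (by positivity), ← mul_pow]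
  gcongr
  exact one_add_norm_le_mul a x

variable [NormedSpace ℝ E]

/-- The constant in the bound `SchwartzMap.one_add_le_sup_seminorm_apply` on the derivatives of
order at most `l` of `f`, weighted by `(1 + ‖x‖) ^ M`. -/
noncomputable def decayConst (M l : ℕ) (f : 𝓢(E, ℂ)) : ℝ :=
  2 ^ M * (Finset.Iic (M, l)).sup (schwartzSeminormFamily ℂ E ℂ) f

lemma decayConst_nonneg (M l : ℕ) (f : 𝓢(E, ℂ)) : 0 ≤ decayConst M l f :=
  mul_nonneg (by positivity) (apply_nonneg _ _)

lemma pow_mul_norm_iteratedFDeriv_le_decayConst (M : ℕ) {i l : ℕ} (hi : i ≤ l) (f : 𝓢(E, ℂ))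
    (x : E) : (1 + ‖x‖) ^ M * ‖iteratedFDeriv ℝ i f x‖ ≤ decayConst M l f :=
  one_add_le_sup_seminorm_apply (m := (M, l)) le_rfl hi f x

lemma norm_iteratedFDeriv_le_decayConst_mul (M : ℕ) {i l : ℕ} (hi : i ≤ l) (f : 𝓢(E, ℂ))
    (x : E) : ‖iteratedFDeriv ℝ i f x‖ ≤ decayConst M l f * ((1 + ‖x‖) ^ M)⁻¹ := by
  rw [← div_eq_mul_inv, le_div_iff₀' (by positivity)]
  exact pow_mul_norm_iteratedFDeriv_le_decayConst M hi f x

lemma norm_le_decayConst_mul (M : ℕ) (f : 𝓢(E, ℂ)) (x : E) :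
    ‖f x‖ ≤ decayConst M 0 f * ((1 + ‖x‖) ^ M)⁻¹ := by
  simpa using norm_iteratedFDeriv_le_decayConst_mul M (le_refl 0) f x

lemma seminorm_le_of_eq_mul {a : E → ℂ} {l M : ℕ} {A : ℝ} (ha : ContDiff ℝ l a)
    (hA : ∀ i ≤ l, ∀ x, ‖iteratedFDeriv ℝ i a x‖ ≤ A * (1 + ‖x‖) ^ M) {f g : 𝓢(E, ℂ)}
    (hf : ∀ x, f x = a x * g x) (k : ℕ) :
    SchwartzMap.seminorm ℂ k l f ≤ 2 ^ l * (A * decayConst (M + k) l g) := by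
  have hA0 : 0 ≤ A := by
    simpa using (norm_nonneg _).trans (hA 0 (Nat.zero_le _) 0)
  refine seminorm_le_bound ℂ k l f
    (mul_nonneg (by positivity) (mul_nonneg hA0 (decayConst_nonneg _ _ _))) fun x => ?_
  have hterm : ∀ i ∈ Finset.range (l + 1), ‖x‖ ^ k * (l.choose i *
      ‖iteratedFDeriv ℝ i a x‖ * ‖iteratedFDeriv ℝ (l - i) g x‖) ≤
      l.choose i * (A * decayConst (M + k) l g) := fun i hi =>
    calc ‖x‖ ^ k * (l.choose i * ‖iteratedFDeriv ℝ i a x‖ * ‖iteratedFDeriv ℝ (l - i) g x‖)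
        ≤ (1 + ‖x‖) ^ k * (l.choose i * (A * (1 + ‖x‖) ^ M) *
            ‖iteratedFDeriv ℝ (l - i) g x‖) := by
          gcongr
          · linarith
          · exact hA i (Finset.mem_range_succ_iff.1 hi) x
      _ = l.choose i * (A * ((1 + ‖x‖) ^ (M + k) * ‖iteratedFDeriv ℝ (l - i) g x‖)) := by ring
      _ ≤ l.choose i * (A * decayConst (M + k) l g) := by
          gcongr
          exact pow_mul_norm_iteratedFDeriv_le_decayConst _ (Nat.sub_le l i) g x
  calc ‖x‖ ^ k * ‖iteratedFDeriv ℝ l f x‖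
      ≤ ‖x‖ ^ k * ∑ i ∈ Finset.range (l + 1), l.choose i *
          ‖iteratedFDeriv ℝ i a x‖ * ‖iteratedFDeriv ℝ (l - i) g x‖ := by
        rw [show ⇑f = fun x => a x * g x from funext hf]
        gcongr
        exact norm_iteratedFDeriv_mul_le ha (g.smooth l) x le_rfl
    _ ≤ ∑ i ∈ Finset.range (l + 1), l.choose i * (A * decayConst (M + k) l g) := by
        rw [Finset.mul_sum]
        exact Finset.sum_le_sum hterm
    _ = 2 ^ l * (A * decayConst (M + k) l g) := by
        rw [← Finset.sum_mul]
        exact_mod_cast congrArg (fun m : ℕ => (m : ℝ) * _) (Nat.sum_range_choose l)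

/-- The pointwise product of two Schwartz functions. -/
noncomputable def schwartzMul (f g : 𝓢(E, ℂ)) : 𝓢(E, ℂ) :=
  pairing (ContinuousLinearMap.mul ℂ ℂ) f g

@[simp] lemma schwartzMul_apply (f g : 𝓢(E, ℂ)) (x : E) : schwartzMul f g x = f x * g x := rfl

lemma seminorm_compSubConst_mul_le (f g : 𝓢(E, ℂ)) (k l M : ℕ) (a : E) :
    SchwartzMap.seminorm ℂ k l (schwartzMul (compSubConstCLM ℂ a f) g) ≤
      2 ^ l * (decayConst M l f * decayConst (M + k) l g) * ((1 + ‖a‖) ^ M)⁻¹ := by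
  have hderiv : ∀ i ≤ l, ∀ x, ‖iteratedFDeriv ℝ i (fun y => f (y - a)) x‖ ≤
      decayConst M l f * ((1 + ‖a‖) ^ M)⁻¹ * (1 + ‖x‖) ^ M := fun i hi x =>
    calc ‖iteratedFDeriv ℝ i (fun y => f (y - a)) x‖
        ≤ decayConst M l f * ((1 + ‖x - a‖) ^ M)⁻¹ := by
          rw [iteratedFDeriv_comp_sub]
          exact norm_iteratedFDeriv_le_decayConst_mul M hi f (x - a)
      _ ≤ decayConst M l f * ((1 + ‖x‖) ^ M * ((1 + ‖a‖) ^ M)⁻¹) := by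
          gcongr
          · exact decayConst_nonneg M l f
          · exact inv_one_add_norm_sub_pow_le a x M
      _ = decayConst M l f * ((1 + ‖a‖) ^ M)⁻¹ * (1 + ‖x‖) ^ M := by ring
  refine (seminorm_le_of_eq_mul ((f.smooth l).comp (contDiff_id.sub contDiff_const)) hderiv
    (fun x => ?_) k).trans_eq (by ring)
  simp

end Multiplication

section PlaneWave

lemma iteratedDeriv_fourierChar (m : ℕ) :
    iteratedDeriv m (fun t : ℝ => (𝐞 t : ℂ)) = fun t => (2 * π * Complex.I) ^ m * (𝐞 t : ℂ) := by
  induction m with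
  | zero => simp
  | succ m ih =>
    ext t
    rw [iteratedDeriv_succ, ih, ((hasDerivAt_fourierChar t).const_mul _).deriv]
    ring

lemma contDiff_fourierChar {m : WithTop ℕ∞} : ContDiff ℝ m fun t : ℝ => (𝐞 t : ℂ) := by
  simp only [fourierChar_apply]
  exact ((Complex.ofRealCLM.contDiff.comp (contDiff_const.mul contDiff_id)).mul
    contDiff_const).cexp

lemma norm_iteratedFDeriv_fourierChar_comp_le {E : Type*} [NormedAddCommGroup E] [NormedSpace ℝ E]
    (L : E →L[ℝ] ℝ) (m : ℕ) (x : E) :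
    ‖iteratedFDeriv ℝ m (fun y => (𝐞 (L y) : ℂ)) x‖ ≤ (2 * π * ‖L‖) ^ m := by
  have hcomp := L.iteratedFDeriv_comp_right (contDiff_fourierChar (m := m)) x le_rfl
  calc ‖iteratedFDeriv ℝ m (fun y => (𝐞 (L y) : ℂ)) x‖
      ≤ ‖iteratedFDeriv ℝ m (fun t : ℝ => (𝐞 t : ℂ)) (L x)‖ * ∏ _i : Fin m, ‖L‖ := by
        rw [show (fun y => (𝐞 (L y) : ℂ)) = (fun t : ℝ => (𝐞 t : ℂ)) ∘ L from rfl, hcomp]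
        exact ContinuousMultilinearMap.norm_compContinuousLinearMap_le _ _
    _ = (2 * π * ‖L‖) ^ m := by
        rw [norm_iteratedFDeriv_eq_norm_iteratedDeriv, iteratedDeriv_fourierChar, norm_mul,
          Circle.norm_coe]
        simp [abs_of_pos pi_pos, mul_pow]

variable {ι : Type*} [Fintype ι]

/-- The plane wave `y ↦ e^{2πi⟨ξ,y⟩}` of frequency `ξ`. -/
noncomputable def planeWave (ξ y : ι → ℝ) : ℂ := 𝐞 (ξ ⬝ᵥ y)

@[simp] lemma norm_planeWave (ξ y : ι → ℝ) : ‖planeWave ξ y‖ = 1 := Circle.norm_coe _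

@[simp] lemma planeWave_zero_left (y : ι → ℝ) : planeWave 0 y = 1 := by simp [planeWave]

@[simp] lemma planeWave_zero_right (ξ : ι → ℝ) : planeWave ξ 0 = 1 := by simp [planeWave]

lemma planeWave_add_left (ξ η y : ι → ℝ) :
    planeWave (ξ + η) y = planeWave ξ y * planeWave η y := by
  simp [planeWave, add_dotProduct, AddChar.map_add_eq_mul]

lemma planeWave_add_right (ξ y z : ι → ℝ) :
    planeWave ξ (y + z) = planeWave ξ y * planeWave ξ z := by
  simp [planeWave, dotProduct_add, AddChar.map_add_eq_mul]

lemma planeWave_smul_left (c : ℝ) (ξ y : ι → ℝ) :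
    planeWave (c • ξ) y = planeWave ξ (c • y) := by
  simp [planeWave]

lemma planeWave_neg_left (ξ y : ι → ℝ) : planeWave (-ξ) y = planeWave ξ (-y) := by
  simp [planeWave]

@[fun_prop]
lemma continuous_planeWave (ξ : ι → ℝ) : Continuous (planeWave ξ) :=
  continuous_subtype_val.comp (continuous_fourierChar.comp (by fun_prop))

/-- The linear form `y ↦ ⟨ξ,y⟩`. -/
noncomputable def dotCLM (ξ : ι → ℝ) : (ι → ℝ) →L[ℝ] ℝ := ∑ i, ξ i • ContinuousLinearMap.proj i

lemma dotCLM_apply (ξ y : ι → ℝ) : dotCLM ξ y = ξ ⬝ᵥ y := by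
  simp [dotCLM, dotProduct]

lemma planeWave_eq_fourierChar_dotCLM (ξ : ι → ℝ) :
    planeWave ξ = fun y => (𝐞 (dotCLM ξ y) : ℂ) := by
  simp only [planeWave, dotCLM_apply, funext_iff, implies_true]

lemma norm_dotCLM_le (ξ : ι → ℝ) : ‖dotCLM ξ‖ ≤ Fintype.card ι * ‖ξ‖ := by
  have hproj : ∀ i, ‖ξ i • (ContinuousLinearMap.proj i : (ι → ℝ) →L[ℝ] ℝ)‖ ≤ ‖ξ‖ := fun i =>
    ContinuousLinearMap.opNorm_le_bound _ (norm_nonneg ξ) fun y => by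
      rw [smul_apply, norm_smul]
      exact mul_le_mul (norm_le_pi_norm ξ i) (norm_le_pi_norm y i) (norm_nonneg _) (norm_nonneg _)
  simpa [dotCLM] using norm_sum_le_of_le Finset.univ fun i _ => hproj i

lemma norm_iteratedFDeriv_planeWave_le (ξ : ι → ℝ) {i l : ℕ} (hi : i ≤ l) (x : ι → ℝ) :
    ‖iteratedFDeriv ℝ i (planeWave ξ) x‖ ≤
      ((1 + 2 * π * Fintype.card ι) * (1 + ‖ξ‖)) ^ l := by
  have hbase : 2 * π * ‖dotCLM ξ‖ ≤ (1 + 2 * π * Fintype.card ι) * (1 + ‖ξ‖) := by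
    calc 2 * π * ‖dotCLM ξ‖ ≤ 2 * π * (Fintype.card ι * ‖ξ‖) := by
          gcongr
          exact norm_dotCLM_le ξ
      _ = (2 * π * Fintype.card ι) * ‖ξ‖ := by ring
      _ ≤ (1 + 2 * π * Fintype.card ι) * (1 + ‖ξ‖) := by gcongr <;> linarith
  have hone : 1 ≤ (1 + 2 * π * Fintype.card ι) * (1 + ‖ξ‖) :=
    one_le_mul_of_one_le_of_one_le (le_add_of_nonneg_right (by positivity))
      (le_add_of_nonneg_right (norm_nonneg ξ))
  calc ‖iteratedFDeriv ℝ i (planeWave ξ) x‖ ≤ (2 * π * ‖dotCLM ξ‖) ^ i := by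
        rw [planeWave_eq_fourierChar_dotCLM]
        exact norm_iteratedFDeriv_fourierChar_comp_le (dotCLM ξ) i x
    _ ≤ ((1 + 2 * π * Fintype.card ι) * (1 + ‖ξ‖)) ^ i := by gcongr
    _ ≤ ((1 + 2 * π * Fintype.card ι) * (1 + ‖ξ‖)) ^ l := pow_le_pow_right₀ hone hi

lemma contDiff_planeWave {m : WithTop ℕ∞} (ξ : ι → ℝ) : ContDiff ℝ m (planeWave ξ) := by
  rw [planeWave_eq_fourierChar_dotCLM]
  exact contDiff_fourierChar.comp (dotCLM ξ).contDiff

lemma hasTemperateGrowth_planeWave (ξ : ι → ℝ) : (planeWave ξ).HasTemperateGrowth :=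
  ⟨contDiff_planeWave ξ, fun m => ⟨0, _, fun x => by
    simpa using norm_iteratedFDeriv_planeWave_le ξ (le_refl m) x⟩⟩

/-- Multiplication of a Schwartz function by the plane wave of frequency `ξ`. -/
noncomputable def planeWaveMul (ξ : ι → ℝ) (f : 𝓢(ι → ℝ, ℂ)) : 𝓢(ι → ℝ, ℂ) :=
  smulLeftCLM ℂ (planeWave ξ) f

lemma planeWaveMul_apply (ξ : ι → ℝ) (f : 𝓢(ι → ℝ, ℂ)) (y : ι → ℝ) :
    planeWaveMul ξ f y = planeWave ξ y * f y :=
  smulLeftCLM_apply_apply (hasTemperateGrowth_planeWave ξ) f y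

lemma exists_seminorm_planeWaveMul_le (f : 𝓢(ι → ℝ, ℂ)) (k l : ℕ) :
    ∃ C : ℝ, ∀ ξ, SchwartzMap.seminorm ℂ k l (planeWaveMul ξ f) ≤ C * (1 + ‖ξ‖) ^ l := by
  refine ⟨2 ^ l * ((1 + 2 * π * Fintype.card ι) ^ l * decayConst (0 + k) l f), fun ξ => ?_⟩
  refine (seminorm_le_of_eq_mul (M := 0) (contDiff_planeWave ξ) (fun i hi x => ?_)
    (planeWaveMul_apply ξ f) k).trans_eq
    (b := 2 ^ l * (((1 + 2 * π * Fintype.card ι) * (1 + ‖ξ‖)) ^ l * decayConst (0 + k) l f)) ?_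
  · simpa using norm_iteratedFDeriv_planeWave_le ξ hi x
  · rw [mul_pow]
    ring

lemma integrable_planeWave_mul (ξ : ι → ℝ) (h : 𝓢(ι → ℝ, ℂ)) :
    Integrable fun y => planeWave ξ y * h y :=
  h.integrable.bdd_mul (c := 1) (continuous_planeWave ξ).aestronglyMeasurable
    (.of_forall fun y => (norm_planeWave ξ y).le)

lemma integral_planeWave_mul_eq_fourier (h : 𝓢(ι → ℝ, ℂ)) (ξ : ι → ℝ) :
    ∫ y, planeWave ξ y * h y =
      𝓕 (compCLMOfContinuousLinearEquiv ℂ (EuclideanSpace.equiv ι ℝ) h) (WithLp.toLp 2 (-ξ)) := by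
  rw [fourier_coe, fourier_eq,
    ← (PiLp.volume_preserving_toLp ι).integral_comp (MeasurableEquiv.toLp 2 _).measurableEmbedding]
  refine integral_congr_ae (.of_forall fun y => ?_)
  simp only [planeWave, EuclideanSpace.inner_toLp_toLp, Circle.smul_def, smul_eq_mul, star_trivial,
    neg_dotProduct, neg_neg, compCLMOfContinuousLinearEquiv_apply]
  rfl

lemma exists_norm_integral_planeWave_mul_le (M : ℕ) :
    ∃ (s : Finset (ℕ × ℕ)) (C : ℝ), 0 ≤ C ∧ ∀ (h : 𝓢(ι → ℝ, ℂ)) (ξ : ι → ℝ),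
      ‖∫ y, planeWave ξ y * h y‖ ≤
        C * s.sup (schwartzSeminormFamily ℂ (ι → ℝ) ℂ) h * ((1 + ‖ξ‖) ^ M)⁻¹ := by
  let T : 𝓢(ι → ℝ, ℂ) →L[ℂ] 𝓢(EuclideanSpace ℝ ι, ℂ) := (fourierTransformCLM ℂ).comp
    (compCLMOfContinuousLinearEquiv ℂ (EuclideanSpace.equiv ι ℝ))
  let p := (Finset.Iic (M, 0)).sup (schwartzSeminormFamily ℂ (EuclideanSpace ℝ ι) ℂ)
  have hp : Continuous p := Seminorm.continuous_finsetSup fun i _ =>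
    (schwartz_withSeminorms ℂ (EuclideanSpace ℝ ι) ℂ).continuous_seminorm i
  obtain ⟨s, C, -, hle⟩ := Seminorm.bound_of_continuous (schwartz_withSeminorms ℂ (ι → ℝ) ℂ)
    (p.comp T.toLinearMap) (hp.comp T.continuous)
  refine ⟨s, 2 ^ M * C, by positivity, fun h ξ => ?_⟩
  have hnorm : ‖ξ‖ ≤ ‖(WithLp.toLp 2 (-ξ) : EuclideanSpace ℝ ι)‖ := by
    refine (pi_norm_le_iff_of_nonneg (norm_nonneg _)).2 fun i => ?_
    simpa using PiLp.norm_apply_le (WithLp.toLp 2 (-ξ) : EuclideanSpace ℝ ι) i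
  calc ‖∫ y, planeWave ξ y * h y‖
      = ‖T h (WithLp.toLp 2 (-ξ))‖ := by rw [integral_planeWave_mul_eq_fourier]; rfl
    _ ≤ 2 ^ M * p (T h) * ((1 + ‖(WithLp.toLp 2 (-ξ) : EuclideanSpace ℝ ι)‖) ^ M)⁻¹ :=
        norm_le_decayConst_mul M (T h) _
    _ ≤ 2 ^ M * (C * s.sup (schwartzSeminormFamily ℂ (ι → ℝ) ℂ) h) * ((1 + ‖ξ‖) ^ M)⁻¹ := by
        gcongr
        exact hle h
    _ = 2 ^ M * C * s.sup (schwartzSeminormFamily ℂ (ι → ℝ) ℂ) h * ((1 + ‖ξ‖) ^ M)⁻¹ := by ring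

end PlaneWave

section Lattice

variable {ι : Type*}

/-- An integer vector, seen as a real vector. -/
def intVec : (ι → ℤ) →+ (ι → ℝ) := (Int.castAddHom ℝ).compLeft ι

@[simp] lemma intVec_apply (k : ι → ℤ) (i : ι) : intVec k i = k i := rfl

lemma intVec_injective : Function.Injective (intVec (ι := ι)) :=
  fun _ _ h => funext fun i => Int.cast_injective (congrFun h i)

lemma intVec_mem_span [Finite ι] (k : ι → ℤ) :
    intVec k ∈ Submodule.span ℤ (Set.range (Pi.basisFun ℝ ι)) :=
  ((Pi.basisFun ℝ ι).mem_span_iff_repr_mem ℤ _).2 fun i => ⟨k i, by simp⟩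

variable [Fintype ι]

lemma summable_inv_one_add_norm_smul_intVec {c : ℝ} (hc : c ≠ 0) :
    Summable fun k : ι → ℤ => ((1 + ‖c • intVec k‖) ^ (Fintype.card ι + 1))⁻¹ := by
  let L := Submodule.span ℤ (Set.range (Pi.basisFun ℝ ι))
  have hrank : Module.finrank ℤ L < Fintype.card ι + 1 := by
    rw [ZLattice.rank ℝ L, Module.finrank_fintype_fun_eq_card]
    exact Nat.lt_succ_self _
  have hinj : Function.Injective fun k : ι → ℤ => (⟨intVec k, intVec_mem_span k⟩ : L) :=
    fun _ _ h => intVec_injective (congrArg Subtype.val h)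
  have hsum := ((ZLattice.summable_norm_pow_inv L _ hrank).comp_injective hinj).mul_left
    (|c|⁻¹ ^ (Fintype.card ι + 1))
  refine Summable.of_norm_bounded_eventually hsum ?_
  filter_upwards [(Set.finite_singleton (0 : ι → ℤ)).compl_mem_cofinite] with k hk
  have hpos : 0 < ‖c • intVec k‖ :=
    norm_pos_iff.2 (smul_ne_zero hc ((map_ne_zero_iff _ intVec_injective).2 hk))
  rw [norm_of_nonneg (by positivity)]
  calc ((1 + ‖c • intVec k‖) ^ (Fintype.card ι + 1))⁻¹
      ≤ (‖c • intVec k‖ ^ (Fintype.card ι + 1))⁻¹ := by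
        gcongr
        linarith
    _ = |c|⁻¹ ^ (Fintype.card ι + 1) * ‖intVec k‖⁻¹ ^ (Fintype.card ι + 1) := by
        rw [norm_smul, norm_eq_abs, mul_pow, mul_inv, inv_pow, inv_pow]

lemma norm_schwartz_sub_le {E : Type*} [NormedAddCommGroup E] [NormedSpace ℝ E] (h : 𝓢(E, ℂ))
    (M : ℕ) (a : E) {R : ℝ} {y : E} (hy : ‖y‖ ≤ R) :
    ‖h (y - a)‖ ≤ decayConst M 0 h * (1 + R) ^ M * ((1 + ‖a‖) ^ M)⁻¹ := by
  have : 0 ≤ R := (norm_nonneg y).trans hy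
  calc ‖h (y - a)‖ ≤ decayConst M 0 h * ((1 + ‖y - a‖) ^ M)⁻¹ := norm_le_decayConst_mul M h _
    _ ≤ decayConst M 0 h * ((1 + R) ^ M * ((1 + ‖a‖) ^ M)⁻¹) := by
        refine mul_le_mul_of_nonneg_left ?_ (decayConst_nonneg _ _ _)
        exact (inv_one_add_norm_sub_pow_le a y M).trans (by gcongr)
    _ = _ := (mul_assoc _ _ _).symm

lemma planeWave_intVec_intVec (p k : ι → ℤ) : planeWave (intVec p) (intVec k) = 1 := by
  have hdot : intVec p ⬝ᵥ intVec k = ((p ⬝ᵥ k : ℤ) : ℝ) := by simp [dotProduct]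
  rw [planeWave, hdot, fourierChar_apply, mul_right_comm]
  push_cast
  simpa [mul_comm, mul_assoc, mul_left_comm] using Complex.exp_int_mul_two_pi_mul_I (p ⬝ᵥ k)

end Lattice

section Unfolding

variable {ι : Type*}

/-- The half-open unit cube with lowest corner `k`. -/
def unitCube (k : ι → ℤ) : Set (ι → ℝ) :=
  Set.univ.pi fun i => Set.Ioc (k i : ℝ) (k i + 1)

lemma iUnion_unitCube : ⋃ k : ι → ℤ, unitCube k = Set.univ := by
  simp only [unitCube, Set.iUnion_univ_pi fun (_ : ι) (m : ℤ) => Set.Ioc (m : ℝ) (m + 1),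
    iUnion_Ioc_intCast, Set.pi_univ]

lemma pairwise_disjoint_unitCube : Pairwise (Function.onFun Disjoint (unitCube (ι := ι))) := by
  intro k l hkl
  obtain ⟨i, hi⟩ := Function.ne_iff.1 hkl
  exact Set.disjoint_univ_pi.2 ⟨i, Set.pairwise_disjoint_Ioc_intCast ℝ hi⟩

lemma measurableSet_unitCube [Countable ι] (k : ι → ℤ) : MeasurableSet (unitCube k) :=
  .univ_pi fun _ => measurableSet_Ioc

variable [Fintype ι] {F : Type*} [NormedAddCommGroup F] [NormedSpace ℝ F]

lemma setIntegral_unitCube_zero_comp_sub (Φ : (ι → ℝ) → F) (k : ι → ℤ) :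
    ∫ y in unitCube 0, Φ (y - intVec k) = ∫ y in unitCube (-k), Φ y := by
  rw [← (measurePreserving_sub_right volume (intVec k)).setIntegral_preimage_emb
    (measurableEmbedding_subRight _) Φ (unitCube (-k))]
  congr 2
  ext x
  simp only [unitCube, Set.mem_preimage, Set.mem_univ_pi, Set.mem_Ioc, Pi.sub_apply, Pi.zero_apply,
    Pi.neg_apply, intVec_apply, Int.cast_zero, Int.cast_neg]
  refine forall_congr' fun i => ?_
  constructor <;> rintro ⟨hlo, hhi⟩ <;> constructor <;> linarith

lemma hasSum_setIntegral_unitCube_comp_sub [CompleteSpace F] {Φ : (ι → ℝ) → F}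
    (hΦ : Integrable Φ) :
    HasSum (fun k : ι → ℤ => ∫ y in unitCube 0, Φ (y - intVec k)) (∫ y, Φ y) := by
  have hsum := hasSum_integral_iUnion measurableSet_unitCube pairwise_disjoint_unitCube
    (hΦ.integrableOn (s := ⋃ k : ι → ℤ, unitCube k))
  rw [iUnion_unitCube, setIntegral_univ] at hsum
  simpa only [setIntegral_unitCube_zero_comp_sub, Function.comp_def, Equiv.neg_apply] using
    (Equiv.neg (ι → ℤ)).hasSum_iff.2 hsum

lemma setIntegral_unitCube_tsum_comp_sub [CompleteSpace F] {Φ : (ι → ℝ) → F}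
    (hΦ : Integrable Φ) :
    ∫ y in unitCube 0, ∑' k : ι → ℤ, Φ (y - intVec k) = ∫ y, Φ y := by
  refine (hasSum_integral_of_summable_integral_norm (fun k => ?_) ?_).unique
    (hasSum_setIntegral_unitCube_comp_sub hΦ)
  · exact (hΦ.comp_sub_right (intVec k)).integrableOn
  · exact (hasSum_setIntegral_unitCube_comp_sub hΦ.norm).summable

end Unfolding

section Torus

variable {ι : Type*}

/-- The quotient map from `ℝ^ι` to the torus `(ℝ/ℤ)^ι`. -/
def toTorus : C(ι → ℝ, UnitAddTorus ι) where
  toFun y i := (y i : UnitAddCircle)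
  continuous_toFun := continuous_pi fun i =>
    (AddCircle.continuous_mk' 1).comp (continuous_apply i)

lemma isQuotientMap_toTorus : Topology.IsQuotientMap (toTorus (ι := ι)) :=
  (IsOpenQuotientMap.piMap fun _ => QuotientAddGroup.isOpenQuotientMap_mk).isQuotientMap

lemma exists_eq_add_intVec_of_toTorus_eq {y z : ι → ℝ} (hyz : toTorus y = toTorus z) :
    ∃ m : ι → ℤ, y = z + intVec m := by
  have hcoord : ∀ i, ∃ m : ℤ, y i - z i = m := fun i => by
    have hi : ((y i - z i : ℝ) : UnitAddCircle) = 0 := by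
      rw [AddCircle.coe_sub, sub_eq_zero]
      exact congrFun hyz i
    obtain ⟨m, hm⟩ := (AddCircle.coe_eq_zero_iff _).1 hi
    exact ⟨m, by simpa using hm.symm⟩
  choose m hm using hcoord
  exact ⟨m, funext fun i => eq_add_of_sub_eq' (hm i)⟩

lemma mFourier_toTorus [Fintype ι] (p : ι → ℤ) (y : ι → ℝ) :
    UnitAddTorus.mFourier p (toTorus y) = planeWave (intVec p) y := by
  simp only [UnitAddTorus.mFourier, toTorus, ContinuousMap.coe_mk, fourier_coe_apply,
    ← Complex.exp_sum, planeWave, fourierChar_apply, dotProduct, intVec_apply]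
  push_cast
  rw [Finset.mul_sum, Finset.sum_mul]
  exact congrArg _ (Finset.sum_congr rfl fun i _ => by ring)

end Torus

section Poisson

variable {ι : Type*} [Fintype ι] (h : 𝓢(ι → ℝ, ℂ))

/-- The sum of all integer translates of `h`. -/
noncomputable def periodization (y : ι → ℝ) : ℂ := ∑' k : ι → ℤ, h (y - intVec k)

lemma periodization_add_intVec (y : ι → ℝ) (m : ι → ℤ) :
    periodization h (y + intVec m) = periodization h y := by
  refine ((Equiv.addRight m).tsum_eq fun k => h (y + intVec m - intVec k)).symm.trans
    (tsum_congr fun k => ?_)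
  simp only [Equiv.coe_addRight, map_add, add_sub_add_right_eq_sub]

lemma continuous_periodization : Continuous (periodization h) := by
  refine continuous_iff_continuousAt.2 fun y₀ => ?_
  have hcont : ContinuousOn (periodization h) (Metric.ball 0 (‖y₀‖ + 1)) := by
    have hsum := (summable_inv_one_add_norm_smul_intVec (ι := ι) one_ne_zero).mul_left
      (decayConst (Fintype.card ι + 1) 0 h * (1 + (‖y₀‖ + 1)) ^ (Fintype.card ι + 1))
    simp only [one_smul] at hsum
    exact continuousOn_tsum (fun k => (h.continuous.comp (by fun_prop)).continuousOn) hsum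
      fun k y hy => norm_schwartz_sub_le h _ (intVec k) (mem_ball_zero_iff.1 hy).le
  exact hcont.continuousAt (Metric.isOpen_ball.mem_nhds (by simp))

lemma exists_torus_periodization :
    ∃ G : C(UnitAddTorus ι, ℂ), ∀ y, G (toTorus y) = periodization h y := by
  let P : C(ι → ℝ, ℂ) := ⟨periodization h, continuous_periodization h⟩
  have hfactors : Function.FactorsThrough P (toTorus (ι := ι)) := fun y z hyz => by
    obtain ⟨m, rfl⟩ := exists_eq_add_intVec_of_toTorus_eq hyz
    exact periodization_add_intVec h z m
  exact ⟨isQuotientMap_toTorus.lift P hfactors,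
    fun y => DFunLike.congr_fun (isQuotientMap_toTorus.lift_comp P hfactors) y⟩

lemma mFourierCoeff_eq_integral_of_periodization {G : C(UnitAddTorus ι, ℂ)}
    (hG : ∀ y, G (toTorus y) = periodization h y) (p : ι → ℤ) :
    UnitAddTorus.mFourierCoeff G p = ∫ y, planeWave (intVec (-p)) y * h y := by
  have hterm : ∀ y (k : ι → ℤ), planeWave (intVec (-p)) (y - intVec k) * h (y - intVec k) =
      planeWave (intVec (-p)) y * h (y - intVec k) := fun y k => by
    rw [sub_eq_add_neg y, ← map_neg, planeWave_add_right, planeWave_intVec_intVec, mul_one]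
  calc UnitAddTorus.mFourierCoeff G p
      = ∫ y in unitCube 0, UnitAddTorus.mFourier (-p) (toTorus y) • G (toTorus y) := by
        rw [UnitAddTorus.mFourierCoeff_eq_integral G p 0]
        simp only [unitCube, Set.pi, Set.mem_univ, true_imp_iff, Pi.zero_apply, Int.cast_zero]
        rfl
    _ = ∫ y in unitCube 0, ∑' k : ι → ℤ,
          planeWave (intVec (-p)) (y - intVec k) * h (y - intVec k) := by
        simp only [mFourier_toTorus, hG, periodization, smul_eq_mul, hterm, tsum_mul_left]
    _ = ∫ y, planeWave (intVec (-p)) y * h y :=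
        setIntegral_unitCube_tsum_comp_sub (integrable_planeWave_mul _ h)

lemma hasSum_poisson_intVec (y : ι → ℝ) :
    HasSum (fun p : ι → ℤ => (∫ z, planeWave (intVec p) z * h z) * planeWave (-intVec p) y)
      (∑' k : ι → ℤ, h (y - intVec k)) := by
  obtain ⟨G, hG⟩ := exists_torus_periodization h
  have hcoeff := mFourierCoeff_eq_integral_of_periodization h hG
  have hsum : Summable (UnitAddTorus.mFourierCoeff G) := by
    obtain ⟨s, C, -, hdecay⟩ := exists_norm_integral_planeWave_mul_le (ι := ι) (Fintype.card ι + 1)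
    refine .of_norm_bounded ((summable_inv_one_add_norm_smul_intVec one_ne_zero).mul_left
      (C * s.sup (schwartzSeminormFamily ℂ (ι → ℝ) ℂ) h)) fun p => ?_
    rw [hcoeff, one_smul, ← norm_neg (intVec p), ← map_neg]
    exact hdecay h (intVec (-p))
  have hseries := UnitAddTorus.hasSum_mFourier_series_apply_of_summable hsum (toTorus y)
  rw [hG, ← (Equiv.neg _).hasSum_iff] at hseries
  simpa only [Function.comp_def, Equiv.neg_apply, hcoeff, neg_neg, mFourier_toTorus, map_neg,
    smul_eq_mul, periodization] using hseries

theorem hasSum_poisson_smul_intVec {c : ℝ} (hc : c ≠ 0) (y : ι → ℝ) :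
    HasSum (fun p : ι → ℤ =>
      (∫ z, planeWave (c • intVec p) z * h z) * planeWave (-(c • intVec p)) y)
      ((((|c| : ℝ) : ℂ) ^ Fintype.card ι)⁻¹ * ∑' k : ι → ℤ, h (y - c⁻¹ • intVec k)) := by
  let hscaled : 𝓢(ι → ℝ, ℂ) := compCLMOfContinuousLinearEquiv ℂ
    (ContinuousLinearEquiv.smulLeft (Units.mk0 c⁻¹ (inv_ne_zero hc))) h
  have happly : ∀ z, hscaled z = h (c⁻¹ • z) := fun _ => rfl
  have hintegral : ∀ p : ι → ℤ, ∫ z, planeWave (intVec p) z * h (c⁻¹ • z) =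
      |c| ^ Fintype.card ι * ∫ z, planeWave (c • intVec p) z * h z := fun p => by
    have hchange := Measure.integral_comp_inv_smul volume
      (fun z => planeWave (c • intVec p) z * h z) c
    simpa [planeWave_smul_left, smul_inv_smul₀ hc, abs_pow] using hchange
  have hpow : ((|c| : ℝ) : ℂ) ^ Fintype.card ι ≠ 0 := pow_ne_zero _ (by simpa using hc)
  have hseries := (hasSum_poisson_intVec hscaled (c • y)).mul_left
    (((|c| : ℝ) : ℂ) ^ Fintype.card ι)⁻¹
  simpa only [hintegral, mul_assoc, inv_mul_cancel_left₀ hpow, ← planeWave_smul_left, smul_neg,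
    happly, smul_sub, inv_smul_smul₀ hc] using hseries

end Poisson

section DiracComb

variable {ι : Type*} [Fintype ι]

lemma summable_seminorm_integral_smul_planeWaveMul {c : ℝ} (hc : c ≠ 0) (h b : 𝓢(ι → ℝ, ℂ))
    (k l : ℕ) :
    Summable fun p : ι → ℤ => SchwartzMap.seminorm ℂ k l
      ((∫ z, planeWave (c • intVec p) z * h z) • planeWaveMul (-(c • intVec p)) b) := by
  obtain ⟨s, A, hA, hcoeff⟩ :=
    exists_norm_integral_planeWave_mul_le (ι := ι) (l + (Fintype.card ι + 1))
  obtain ⟨B, hwave⟩ := exists_seminorm_planeWaveMul_le b k l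
  refine .of_nonneg_of_le (fun p => apply_nonneg _ _) (fun p => ?_)
    ((summable_inv_one_add_norm_smul_intVec hc).mul_left
      (A * s.sup (schwartzSeminormFamily ℂ (ι → ℝ) ℂ) h * B))
  rw [map_smul_eq_mul]
  calc ‖∫ z, planeWave (c • intVec p) z * h z‖ *
        SchwartzMap.seminorm ℂ k l (planeWaveMul (-(c • intVec p)) b)
      ≤ A * s.sup (schwartzSeminormFamily ℂ (ι → ℝ) ℂ) h *
          ((1 + ‖c • intVec p‖) ^ (l + (Fintype.card ι + 1)))⁻¹ *
          (B * (1 + ‖c • intVec p‖) ^ l) := by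
        refine mul_le_mul (hcoeff h _) ?_ (apply_nonneg _ _) (by positivity)
        simpa only [norm_neg] using hwave (-(c • intVec p))
    _ = A * s.sup (schwartzSeminormFamily ℂ (ι → ℝ) ℂ) h * B *
          ((1 + ‖c • intVec p‖) ^ (Fintype.card ι + 1))⁻¹ := by
        rw [pow_add]
        field_simp

lemma summable_seminorm_compSubConst_mul {c : ℝ} (hc : c ≠ 0) (h b : 𝓢(ι → ℝ, ℂ)) (k l : ℕ) :
    Summable fun m : ι → ℤ =>
      SchwartzMap.seminorm ℂ k l (schwartzMul (compSubConstCLM ℂ (c • intVec m) h) b) :=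
  .of_nonneg_of_le (fun _ => apply_nonneg _ _)
    (fun m => seminorm_compSubConst_mul_le h b k l (Fintype.card ι + 1) (c • intVec m))
    ((summable_inv_one_add_norm_smul_intVec hc).mul_left _)

/-- The distributions on which every plane wave with frequency in `cℤ^ι` acts by its value at `x₀`,
that is the solutions `ν` of `e_{cp} ν = e_{cp}(x₀) ν` for `p ∈ ℤ^ι`. They are the Dirac combs on
the lattice `x₀ + c⁻¹ℤ^ι`. -/
def IsPlaneWaveEigen (c : ℝ) (x₀ : ι → ℝ) (ν : 𝓢(ι → ℝ, ℂ) →L[ℂ] ℂ) : Prop :=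
  ∀ (p : ι → ℤ) (b : 𝓢(ι → ℝ, ℂ)),
    ν (planeWaveMul (c • intVec p) b) = planeWave (c • intVec p) x₀ * ν b

-- Expand `∑ h(· - c⁻¹m)` as a Fourier series and let `ν` act on `b` times each of its terms.
theorem IsPlaneWaveEigen.hasSum_compSubConst_mul {c : ℝ} (hc : c ≠ 0) {x₀ : ι → ℝ}
    {ν : 𝓢(ι → ℝ, ℂ) →L[ℂ] ℂ} (hν : IsPlaneWaveEigen c x₀ ν) (h b : 𝓢(ι → ℝ, ℂ)) :
    HasSum (fun m : ι → ℤ => ν (schwartzMul (compSubConstCLM ℂ (c⁻¹ • intVec m) h) b))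
      ((∑' m : ι → ℤ, h (x₀ - c⁻¹ • intVec m)) * ν b) := by
  let C : ℂ := (((|c| : ℝ) : ℂ) ^ Fintype.card ι)⁻¹
  have hC : C ≠ 0 := inv_ne_zero (pow_ne_zero _ (by simpa using hc))
  have hfourier := summable_seminorm_integral_smul_planeWaveMul hc h b
  have htranslates := summable_seminorm_compSubConst_mul (inv_ne_zero hc) h b
  have hpoisson : schwartzTsum _ hfourier = C • schwartzTsum _ htranslates := by
    ext y
    have hy := (hasSum_poisson_smul_intVec h hc y).tsum_eq
    simp only [schwartzTsum_apply, smul_apply, planeWaveMul_apply, schwartzMul_apply,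
      compSubConstCLM_apply, smul_eq_mul, ← mul_assoc, tsum_mul_right, hy, C]
  have hleft := (hasSum_schwartzTsum hfourier).mapL ν
  have hright := (hasSum_schwartzTsum htranslates).mapL ν
  have hterm : ∀ p : ι → ℤ,
      ν ((∫ z, planeWave (c • intVec p) z * h z) • planeWaveMul (-(c • intVec p)) b) =
        (∫ z, planeWave (c • intVec p) z * h z) * planeWave (-(c • intVec p)) x₀ * ν b :=
    fun p => by
      have hneg := hν (-p) b
      rw [map_neg, smul_neg] at hneg
      rw [map_smul, smul_eq_mul, hneg, mul_assoc]
  simp only [hterm, hpoisson, map_smul, smul_eq_mul] at hleft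
  have heq := hleft.unique ((hasSum_poisson_smul_intVec h hc x₀).mul_right (ν b))
  rw [mul_assoc] at heq
  rwa [← mul_left_cancel₀ hC heq]

end DiracComb

section LatticeBump

variable {ι : Type*}

/-- A function with value `1` at the origin whose translates by distinct vectors of `c⁻¹ℤ^ι` have
pointwise product zero. It isolates one point of a lattice `x₀ + c⁻¹ℤ^ι` from all the others. -/
structure IsLatticeBump (c : ℝ) (χ : (ι → ℝ) → ℂ) : Prop where
  apply_zero : χ 0 = 1
  mul_apply_sub_eq_zero : ∀ (y : ι → ℝ) {m : ι → ℤ}, m ≠ 0 → χ y * χ (y - c⁻¹ • intVec m) = 0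

lemma IsLatticeBump.apply_smul_intVec {c : ℝ} {χ : (ι → ℝ) → ℂ} (hχ : IsLatticeBump c χ)
    {m : ι → ℤ} (hm : m ≠ 0) : χ (c⁻¹ • intVec m) = 0 := by
  simpa [hχ.apply_zero] using hχ.mul_apply_sub_eq_zero 0 (neg_ne_zero.2 hm)

variable [Fintype ι]

lemma one_le_norm_intVec {m : ι → ℤ} (hm : m ≠ 0) : 1 ≤ ‖intVec m‖ := by
  obtain ⟨i, hi⟩ := Function.ne_iff.1 hm
  calc (1 : ℝ) ≤ |(m i : ℝ)| := by exact_mod_cast Int.one_le_abs hi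
    _ ≤ ‖intVec m‖ := norm_le_pi_norm (intVec m) i

lemma exists_isLatticeBump {c : ℝ} (hc : c ≠ 0) : ∃ χ : 𝓢(ι → ℝ, ℂ), IsLatticeBump c χ := by
  have hc' : 0 < |c|⁻¹ := inv_pos.2 (abs_pos.2 hc)
  obtain ⟨φ, hφ⟩ : ∃ φ : ContDiffBump (0 : ι → ℝ), φ.rOut = |c|⁻¹ / 2 :=
    ⟨⟨|c|⁻¹ / 4, |c|⁻¹ / 2, by positivity, by linarith⟩, rfl⟩
  have hsupp : HasCompactSupport fun y => (φ y : ℂ) :=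
    φ.hasCompactSupport.comp_left Complex.ofReal_zero
  have hball : ∀ y, (φ y : ℂ) ≠ 0 → ‖y‖ < |c|⁻¹ / 2 := fun y hy => by
    rw [Complex.ofReal_ne_zero, ← Function.mem_support, φ.support_eq, mem_ball_zero_iff] at hy
    exact hφ ▸ hy
  have hzero : (φ 0 : ℂ) = 1 := by
    rw [φ.one_of_mem_closedBall (Metric.mem_closedBall_self φ.rIn_pos.le), Complex.ofReal_one]
  have hdisjoint : ∀ (y : ι → ℝ) {m : ι → ℤ}, m ≠ 0 →
      (φ y : ℂ) * (φ (y - c⁻¹ • intVec m) : ℂ) = 0 := fun y m hm => by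
    by_contra hne
    have hdist := norm_sub_le y (y - c⁻¹ • intVec m)
    rw [sub_sub_cancel, norm_smul, norm_inv, norm_eq_abs] at hdist
    have hfar := le_mul_of_one_le_right hc'.le (one_le_norm_intVec hm)
    linarith [hball _ (left_ne_zero_of_mul hne), hball _ (right_ne_zero_of_mul hne)]
  exact ⟨hsupp.toSchwartzMap (Complex.ofRealCLM.contDiff.comp φ.contDiff), hzero, hdisjoint⟩

variable {c : ℝ} {x₀ : ι → ℝ} {ν : 𝓢(ι → ℝ, ℂ) →L[ℂ] ℂ} {χ : 𝓢(ι → ℝ, ℂ)}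

lemma IsPlaneWaveEigen.apply_bump_mul_bump (hc : c ≠ 0) (hν : IsPlaneWaveEigen c x₀ ν)
    (hχ : IsLatticeBump c χ) (k : ι → ℤ) (g : 𝓢(ι → ℝ, ℂ)) :
    ν (schwartzMul (schwartzMul (compSubConstCLM ℂ (x₀ + c⁻¹ • intVec k) χ)
        (compSubConstCLM ℂ (x₀ + c⁻¹ • intVec k) χ)) g) =
      ν (compSubConstCLM ℂ (x₀ + c⁻¹ • intVec k) χ) * g (x₀ + c⁻¹ • intVec k) := by
  let χk := compSubConstCLM ℂ (x₀ + c⁻¹ • intVec k) χ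
  have hleft : ∀ m : ι → ℤ, m ≠ 0 →
      ν (schwartzMul (compSubConstCLM ℂ (c⁻¹ • intVec m) (schwartzMul χk g)) χk) = 0 :=
    fun m hm => by
      refine (congrArg ν (SchwartzMap.ext fun y => ?_)).trans (map_zero ν)
      have hy := hχ.mul_apply_sub_eq_zero (y - (x₀ + c⁻¹ • intVec k)) hm
      simp only [schwartzMul_apply, compSubConstCLM_apply, χk, zero_apply,
        sub_right_comm y (c⁻¹ • intVec m)]
      linear_combination g (y - c⁻¹ • intVec m) * hy
  have hright : ∀ m : ι → ℤ, m ≠ -k → (schwartzMul χk g) (x₀ - c⁻¹ • intVec m) = 0 :=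
    fun m hm => by
      have hbump := hχ.apply_smul_intVec (neg_ne_zero.2 (mt eq_neg_of_add_eq_zero_left hm))
      have harg : x₀ - c⁻¹ • intVec m - (x₀ + c⁻¹ • intVec k) = c⁻¹ • intVec (-(m + k)) := by
        simp only [map_neg, map_add, smul_neg, smul_add]
        abel
      rw [schwartzMul_apply, compSubConstCLM_apply, harg, hbump, zero_mul]
  have hsum := (hasSum_single 0 hleft).unique (hν.hasSum_compSubConst_mul hc (schwartzMul χk g) χk)
  rw [tsum_eq_single (-k) hright] at hsum
  have hone : χk (x₀ + c⁻¹ • intVec k) = 1 := by simp [χk, hχ.apply_zero]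
  calc ν (schwartzMul (schwartzMul χk χk) g)
      = ν (schwartzMul (compSubConstCLM ℂ (c⁻¹ • intVec 0) (schwartzMul χk g)) χk) := by
        refine congrArg ν (SchwartzMap.ext fun y => ?_)
        simp only [schwartzMul_apply, compSubConstCLM_apply, map_zero, smul_zero, sub_zero]
        ring
    _ = ν χk * g (x₀ + c⁻¹ • intVec k) := by
        rw [hsum, map_neg, smul_neg, sub_neg_eq_add, schwartzMul_apply, hone, one_mul, mul_comm]

-- Cut `ν g` into the pieces `ν (χₖ² g)`, each of which only sees the value of `g` at one point.
theorem IsPlaneWaveEigen.hasSum_apply_bump (hc : c ≠ 0) (hν : IsPlaneWaveEigen c x₀ ν)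
    (hχ : IsLatticeBump c χ) (g : 𝓢(ι → ℝ, ℂ)) :
    HasSum (fun k : ι → ℤ =>
      ν (compSubConstCLM ℂ (x₀ + c⁻¹ • intVec k) χ) * g (x₀ + c⁻¹ • intVec k)) (ν g) := by
  have hpieces := hν.hasSum_compSubConst_mul hc
    (schwartzMul (compSubConstCLM ℂ x₀ χ) (compSubConstCLM ℂ x₀ χ)) g
  rw [tsum_eq_single 0 fun m hm => ?_] at hpieces
  · simp only [map_zero, smul_zero, sub_zero, schwartzMul_apply, compSubConstCLM_apply, sub_self,
      hχ.apply_zero, one_mul] at hpieces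
    refine hpieces.congr_fun fun k => ?_
    rw [← hν.apply_bump_mul_bump hc hχ k g]
    refine congrArg ν (SchwartzMap.ext fun y => ?_)
    simp only [schwartzMul_apply, compSubConstCLM_apply, sub_add_eq_sub_sub_swap]
  · have hbump := hχ.apply_smul_intVec (neg_ne_zero.2 hm)
    rw [map_neg, smul_neg] at hbump
    rw [schwartzMul_apply, compSubConstCLM_apply, sub_sub_cancel_left, hbump, zero_mul]

end LatticeBump

section QuasiPeriodic

variable {ι : Type*}

lemma exists_finset_residues [Finite ι] {N : ℕ} (hN : N ≠ 0) :
    ∃ S : Finset (ι → ℤ), ∀ k q : ι → ℤ, k - N • q ∈ S ↔ q = fun i => k i / N := by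
  classical
  cases nonempty_fintype ι
  refine ⟨Fintype.piFinset fun _ => Finset.Ico 0 (N : ℤ), fun k q => ?_⟩
  have hpos : (0 : ℤ) < N := by exact_mod_cast Nat.pos_of_ne_zero hN
  have hcoord : ∀ i, (k - N • q) i = k i - N * q i := fun i => by simp
  simp only [Fintype.mem_piFinset, Finset.mem_Ico, hcoord, funext_iff]
  refine forall_congr' fun i => ⟨fun hi => ?_, fun hi => ?_⟩
  · exact (((Int.ediv_emod_unique hpos).2 ⟨by ring, hi⟩).1).symm
  · rw [hi, ← Int.emod_def]
    exact ⟨Int.emod_nonneg _ hpos.ne', Int.emod_lt_of_pos _ hpos⟩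

lemma inv_smul_intVec_add_nsmul {N : ℕ} (hN : N ≠ 0) (k q : ι → ℤ) :
    (N : ℝ)⁻¹ • intVec (k + N • q) = (N : ℝ)⁻¹ • intVec k + intVec q := by
  rw [map_add, map_nsmul, smul_add, ← Nat.cast_smul_eq_nsmul ℝ,
    inv_smul_smul₀ (Nat.cast_ne_zero.2 hN)]

variable [Fintype ι]

/-- The sequences `c` on `ℤ^ι` with `c (k + Nq) = e^{-2πi⟨η,q⟩} c k`, which are the coefficients of
the Dirac combs that are multiplied by `e^{2πi⟨η,q⟩}` under the translation of the test function
`f` into `f(· + q)`. -/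
def IsQuasiPeriodic (N : ℕ) (η : ι → ℝ) (c : (ι → ℤ) → ℂ) : Prop :=
  ∀ k q : ι → ℤ, c (k + N • q) = planeWave (-η) (intVec q) * c k

lemma IsQuasiPeriodic.exists_norm_le {N : ℕ} (hN : N ≠ 0) {η : ι → ℝ} {c : (ι → ℤ) → ℂ}
    (hc : IsQuasiPeriodic N η c) : ∃ B, ∀ k, ‖c k‖ ≤ B := by
  obtain ⟨S, hS⟩ := exists_finset_residues (ι := ι) hN
  refine ⟨∑ l ∈ S, ‖c l‖, fun k => ?_⟩
  let q : ι → ℤ := fun i => k i / N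
  calc ‖c k‖ = ‖c (k - N • q + N • q)‖ := by rw [sub_add_cancel]
    _ = ‖c (k - N • q)‖ := by rw [hc, norm_mul, norm_planeWave, one_mul]
    _ ≤ ∑ l ∈ S, ‖c l‖ :=
        Finset.single_le_sum (f := fun l => ‖c l‖) (fun l _ => norm_nonneg _) ((hS k q).2 rfl)

/-- `ν` is the Dirac comb `∑ₖ c k δ_{x₀ + ak}` on the lattice `x₀ + aℤ^ι`. -/
def IsDiracComb (x₀ : ι → ℝ) (a : ℝ) (c : (ι → ℤ) → ℂ) (ν : 𝓢(ι → ℝ, ℂ) →L[ℂ] ℂ) : Prop :=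
  ∀ g : 𝓢(ι → ℝ, ℂ), HasSum (fun k : ι → ℤ => c k * g (x₀ + a • intVec k)) (ν g)

lemma exists_isDiracComb (x₀ : ι → ℝ) {a : ℝ} (ha : a ≠ 0) {c : (ι → ℤ) → ℂ} {B : ℝ}
    (hB : ∀ k, ‖c k‖ ≤ B) : ∃ ν, IsDiracComb x₀ a c ν := by
  have hB0 : 0 ≤ B := (norm_nonneg _).trans (hB 0)
  let M := Fintype.card ι + 1
  let w : (ι → ℤ) → ℝ := fun k => B * (1 + ‖x₀‖) ^ M * ((1 + ‖a • intVec k‖) ^ M)⁻¹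
  have hw : Summable w := (summable_inv_one_add_norm_smul_intVec ha).mul_left _
  have hterm : ∀ (g : 𝓢(ι → ℝ, ℂ)) (k : ι → ℤ),
      ‖c k * g (x₀ + a • intVec k)‖ ≤ decayConst M 0 g * w k := fun g k => by
    have hg := norm_schwartz_sub_le g M (-(a • intVec k)) (le_refl ‖x₀‖)
    rw [sub_neg_eq_add, norm_neg] at hg
    rw [norm_mul]
    exact (mul_le_mul (hB k) hg (norm_nonneg _) hB0).trans_eq (by simp only [w]; ring)
  have hsum : ∀ g : 𝓢(ι → ℝ, ℂ), Summable fun k => c k * g (x₀ + a • intVec k) := fun g =>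
    .of_norm_bounded (hw.mul_left _) (hterm g)
  refine ⟨mkCLMtoNormedSpace (fun g => ∑' k, c k * g (x₀ + a • intVec k)) (fun f g => ?_)
    (fun z g => ?_) ⟨Finset.Iic (M, 0), 2 ^ M * ∑' k, w k,
      mul_nonneg (by positivity) (tsum_nonneg fun k => by positivity), fun g => ?_⟩,
    fun g => (hsum g).hasSum⟩
  · simp only [add_apply, mul_add, (hsum f).tsum_add (hsum g)]
  · simp only [smul_apply, smul_eq_mul, mul_left_comm _ z, tsum_mul_left, RingHom.id_apply]
  · calc ‖∑' k, c k * g (x₀ + a • intVec k)‖ ≤ decayConst M 0 g * ∑' k, w k :=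
          tsum_of_norm_bounded (hw.hasSum.mul_left _) (hterm g)
      _ = _ := by rw [decayConst]; ring

variable {N : ℕ} {η x₀ : ι → ℝ} {c : (ι → ℤ) → ℂ} {ν : 𝓢(ι → ℝ, ℂ) →L[ℂ] ℂ}

lemma IsDiracComb.apply_planeWaveMul_compSubConst (hN : N ≠ 0)
    (hν : IsDiracComb x₀ (N : ℝ)⁻¹ c ν) (hc : IsQuasiPeriodic N η c) (q p : ι → ℤ)
    (f : 𝓢(ι → ℝ, ℂ)) :
    ν (planeWaveMul ((N : ℝ) • intVec p) (compSubConstCLM ℂ (-intVec q) f)) =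
      planeWave η (intVec q) * planeWave ((N : ℝ) • intVec p) x₀ * ν f := by
  refine (hν _).unique ?_
  have hshift := (Equiv.addRight (N • q)).hasSum_iff.2
    ((hν f).mul_left (planeWave η (intVec q) * planeWave ((N : ℝ) • intVec p) x₀))
  refine hshift.congr_fun fun k => ?_
  have hinv : planeWave η (intVec q) * planeWave (-η) (intVec q) = 1 := by
    rw [← planeWave_add_left, add_neg_cancel, planeWave_zero_left]
  have hnode : planeWave ((N : ℝ) • intVec p) (x₀ + (N : ℝ)⁻¹ • intVec k) =
      planeWave ((N : ℝ) • intVec p) x₀ := by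
    rw [planeWave_add_right, ← planeWave_smul_left, inv_smul_smul₀ (Nat.cast_ne_zero.2 hN),
      planeWave_intVec_intVec, mul_one]
  simp only [Function.comp_apply, Equiv.coe_addRight, hc k q, inv_smul_intVec_add_nsmul hN,
    planeWaveMul_apply, compSubConstCLM_apply, sub_neg_eq_add, hnode, ← add_assoc]
  linear_combination -(planeWave ((N : ℝ) • intVec p) x₀ * c k *
    f (x₀ + (N : ℝ)⁻¹ • intVec k + intVec q)) * hinv

lemma IsPlaneWaveEigen.exists_isDiracComb (hN : N ≠ 0) (hν : IsPlaneWaveEigen N x₀ ν)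
    (htrans : ∀ q f, ν (compSubConstCLM ℂ (-intVec q) f) = planeWave η (intVec q) * ν f) :
    ∃ c, IsQuasiPeriodic N η c ∧ IsDiracComb x₀ (N : ℝ)⁻¹ c ν := by
  have hN' : (N : ℝ) ≠ 0 := Nat.cast_ne_zero.2 hN
  obtain ⟨χ, hχ⟩ := exists_isLatticeBump (ι := ι) hN'
  refine ⟨fun k => ν (compSubConstCLM ℂ (x₀ + (N : ℝ)⁻¹ • intVec k) χ), fun k q => ?_,
    hν.hasSum_apply_bump hN' hχ⟩
  rw [planeWave_neg_left, ← map_neg, ← htrans]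
  refine congrArg ν (SchwartzMap.ext fun y => ?_)
  simp only [compSubConstCLM_apply, inv_smul_intVec_add_nsmul hN, map_neg, neg_neg]
  congr 1
  abel

end QuasiPeriodic

section CombCoefficients

variable {ι : Type*} [Fintype ι]

lemma summable_finset_sup_seminorm_compSubConst_mul {c : ℝ} (hc : c ≠ 0) (s : Finset (ℕ × ℕ))
    (f g : 𝓢(ι → ℝ, ℂ)) :
    Summable fun q : ι → ℤ => s.sup (schwartzSeminormFamily ℂ (ι → ℝ) ℂ)
      (schwartzMul (compSubConstCLM ℂ (c • intVec q) f) g) := by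
  refine .of_nonneg_of_le (fun q => apply_nonneg _ _) (fun q => ?_)
    (summable_sum fun i (_ : i ∈ s) => summable_seminorm_compSubConst_mul hc f g i.1 i.2)
  refine (Seminorm.finset_sup_le_sum (schwartzSeminormFamily ℂ (ι → ℝ) ℂ) s _).trans_eq ?_
  simp only [sum_apply, schwartzSeminormFamily]

variable (N : ℕ) (η x₀ : ι → ℝ)

/-- The coefficient at the lattice point `x₀ + k/N` of the Dirac comb obtained by projecting `f`
onto the quasi-periodic distributions. -/
noncomputable def combCoeff (f : 𝓢(ι → ℝ, ℂ)) (k : ι → ℤ) : ℂ :=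
  ((N : ℂ) ^ Fintype.card ι)⁻¹ *
    ∑' q : ι → ℤ, planeWave (-η) (intVec q) * f (x₀ + (N : ℝ)⁻¹ • intVec k - intVec q)

variable {N}

lemma isQuasiPeriodic_combCoeff (hN : N ≠ 0) (f : 𝓢(ι → ℝ, ℂ)) :
    IsQuasiPeriodic N η (combCoeff N η x₀ f) := fun k q => by
  have hterm : ∀ r, planeWave (-η) (intVec (r + q)) *
      f (x₀ + (N : ℝ)⁻¹ • intVec (k + N • q) - intVec (r + q)) =
      planeWave (-η) (intVec q) *
        (planeWave (-η) (intVec r) * f (x₀ + (N : ℝ)⁻¹ • intVec k - intVec r)) := fun r => by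
    rw [inv_smul_intVec_add_nsmul hN, map_add, planeWave_add_right, ← add_assoc,
      add_sub_add_right_eq_sub]
    ring
  have hshift := (Equiv.addRight q).tsum_eq fun r => planeWave (-η) (intVec r) *
    f (x₀ + (N : ℝ)⁻¹ • intVec (k + N • q) - intVec r)
  simp only [Equiv.coe_addRight, hterm, tsum_mul_left] at hshift
  rw [combCoeff, combCoeff, ← hshift, mul_left_comm]

/-- The term of index `(q, p) ∈ ℤ^ι × ℤ^ι` of the series defining the projector, paired
with `g`. -/
noncomputable def projectorTerm (N : ℕ) (η x₀ : ι → ℝ) (f g : 𝓢(ι → ℝ, ℂ))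
    (w : (ι → ℤ) × (ι → ℤ)) : ℂ :=
  planeWave (-η) (intVec w.1) *
    ((∫ z, planeWave ((N : ℝ) • intVec w.2) z *
      schwartzMul (compSubConstCLM ℂ (intVec w.1) f) g z) *
      planeWave (-((N : ℝ) • intVec w.2)) x₀)

lemma summable_projectorTerm (hN : N ≠ 0) (f g : 𝓢(ι → ℝ, ℂ)) :
    Summable (projectorTerm N η x₀ f g) := by
  obtain ⟨s, C, hC, hcoeff⟩ := exists_norm_integral_planeWave_mul_le (ι := ι) (Fintype.card ι + 1)
  have hq := summable_finset_sup_seminorm_compSubConst_mul one_ne_zero s f g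
  have hp := summable_inv_one_add_norm_smul_intVec (ι := ι) (Nat.cast_ne_zero (R := ℝ).2 hN)
  refine .of_norm_bounded ((hq.mul_left C).mul_of_nonneg hp
    (fun q => mul_nonneg hC (apply_nonneg _ _)) fun p => by positivity) fun w => ?_
  simp only [projectorTerm, norm_mul, norm_planeWave, one_mul, mul_one, one_smul]
  exact hcoeff _ _

lemma summable_planeWave_mul_combTerm (hN : N ≠ 0) (f g : 𝓢(ι → ℝ, ℂ)) :
    Summable fun w : (ι → ℤ) × (ι → ℤ) => planeWave (-η) (intVec w.1) *
      schwartzMul (compSubConstCLM ℂ (intVec w.1) f) g (x₀ - (N : ℝ)⁻¹ • intVec w.2) := by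
  let M := Fintype.card ι + 1
  have hq : Summable fun q : ι → ℤ =>
      decayConst M 0 (schwartzMul (compSubConstCLM ℂ (intVec q) f) g) := by
    simpa only [one_smul, decayConst] using
      (summable_finset_sup_seminorm_compSubConst_mul one_ne_zero
        (Finset.Iic (M, 0)) f g).mul_left (2 ^ M)
  have hk := summable_inv_one_add_norm_smul_intVec (ι := ι)
    (inv_ne_zero (Nat.cast_ne_zero (R := ℝ).2 hN))
  refine .of_norm_bounded ((hq.mul_right ((1 + ‖x₀‖) ^ M)).mul_of_nonneg hk
    (fun q => mul_nonneg (decayConst_nonneg _ _ _) (by positivity))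
    fun k => by positivity) fun w => ?_
  rw [norm_mul, norm_planeWave, one_mul]
  exact norm_schwartz_sub_le _ M ((N : ℝ)⁻¹ • intVec w.2) (le_refl ‖x₀‖)

-- Poisson summation turns the sum over `p` into a sum over the lattice `x₀ + N⁻¹ℤ^ι`.
theorem tsum_projectorTerm (hN : N ≠ 0) (f g : 𝓢(ι → ℝ, ℂ)) :
    ∑' w, projectorTerm N η x₀ f g w =
      ∑' k : ι → ℤ, combCoeff N η x₀ f k * g (x₀ + (N : ℝ)⁻¹ • intVec k) := by
  let C : ℂ := ((N : ℂ) ^ Fintype.card ι)⁻¹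
  let h : (ι → ℤ) → 𝓢(ι → ℝ, ℂ) := fun q => schwartzMul (compSubConstCLM ℂ (intVec q) f) g
  have hpoisson : ∀ q, ∑' p, projectorTerm N η x₀ f g (q, p) =
      C * ∑' k : ι → ℤ, planeWave (-η) (intVec q) * h q (x₀ - (N : ℝ)⁻¹ • intVec k) := fun q => by
    have hq := (hasSum_poisson_smul_intVec (h q) (Nat.cast_ne_zero (R := ℝ).2 hN) x₀).tsum_eq
    rw [Nat.abs_cast, Complex.ofReal_natCast] at hq
    simp only [projectorTerm, tsum_mul_left, h, C] at hq ⊢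
    rw [hq, mul_left_comm]
  calc ∑' w, projectorTerm N η x₀ f g w
      = C * ∑' q, ∑' k : ι → ℤ,
          planeWave (-η) (intVec q) * h q (x₀ - (N : ℝ)⁻¹ • intVec k) := by
        rw [(summable_projectorTerm η x₀ hN f g).tsum_prod, tsum_congr hpoisson, tsum_mul_left]
    _ = C * ∑' k : ι → ℤ, ∑' q,
          planeWave (-η) (intVec q) * h q (x₀ - (N : ℝ)⁻¹ • intVec k) := by
        exact congrArg (C * ·) (Summable.tsum_comm
          (f := fun q k => planeWave (-η) (intVec q) * h q (x₀ - (N : ℝ)⁻¹ • intVec k))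
          (summable_planeWave_mul_combTerm η x₀ hN f g)).symm
    _ = ∑' k : ι → ℤ, combCoeff N η x₀ f k * g (x₀ + (N : ℝ)⁻¹ • intVec k) := by
        rw [← (Equiv.neg (ι → ℤ)).tsum_eq, ← tsum_mul_left]
        refine tsum_congr fun k => ?_
        simp only [Equiv.neg_apply, map_neg, smul_neg, sub_neg_eq_add, h, schwartzMul_apply,
          compSubConstCLM_apply, ← mul_assoc, tsum_mul_right, combCoeff, C]

lemma exists_schwartz_eq_indicator_on_lattice {c : ℝ} (hc : c ≠ 0) (S : Finset (ι → ℤ))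
    (a : (ι → ℤ) → ℂ) :
    ∃ f : 𝓢(ι → ℝ, ℂ), ∀ m, f (x₀ + c⁻¹ • intVec m) = Set.indicator (↑S) a m := by
  classical
  obtain ⟨χ, hχ⟩ := exists_isLatticeBump (ι := ι) hc
  refine ⟨∑ l ∈ S, a l • compSubConstCLM ℂ (x₀ + c⁻¹ • intVec l) χ, fun m => ?_⟩
  have hbump : ∀ l, χ (x₀ + c⁻¹ • intVec m - (x₀ + c⁻¹ • intVec l)) = if m = l then 1 else 0 :=
    fun l => by
      rw [add_sub_add_left_eq_sub, ← smul_sub, ← map_sub]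
      split_ifs with h
      · rw [h, sub_self, map_zero, smul_zero, hχ.apply_zero]
      · exact hχ.apply_smul_intVec (sub_ne_zero.2 h)
  simp only [sum_apply, smul_apply, compSubConstCLM_apply, hbump, smul_eq_mul, mul_ite, mul_one,
    mul_zero, Finset.sum_ite_eq, Set.indicator_apply, Finset.mem_coe]

variable {η}

lemma IsQuasiPeriodic.exists_combCoeff_eq (hN : N ≠ 0) {c : (ι → ℤ) → ℂ}
    (hc : IsQuasiPeriodic N η c) : ∃ f : 𝓢(ι → ℝ, ℂ), combCoeff N η x₀ f = c := by
  classical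
  obtain ⟨S, hS⟩ := exists_finset_residues (ι := ι) hN
  obtain ⟨f, hf⟩ := exists_schwartz_eq_indicator_on_lattice x₀ (Nat.cast_ne_zero (R := ℝ).2 hN) S
    fun l => (N : ℂ) ^ Fintype.card ι * c l
  refine ⟨f, funext fun k => ?_⟩
  have hterm : ∀ q : ι → ℤ,
      planeWave (-η) (intVec q) * f (x₀ + (N : ℝ)⁻¹ • intVec k - intVec q) =
        if q = (fun i => k i / N) then (N : ℂ) ^ Fintype.card ι * c k else 0 := fun q => by
    have hshift := inv_smul_intVec_add_nsmul hN (k - N • q) q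
    have hck := hc (k - N • q) q
    rw [sub_add_cancel] at hshift hck
    rw [hshift, ← add_assoc, add_sub_cancel_right, hf, hck]
    simp only [Set.indicator_apply, Finset.mem_coe, hS, mul_ite, mul_zero, mul_left_comm]
  rw [combCoeff, tsum_congr hterm, tsum_ite_eq,
    inv_mul_cancel_left₀ (pow_ne_zero _ (Nat.cast_ne_zero.2 hN))]

end CombCoefficients

section Heisenberg

variable {n N : ℕ}

lemma exp_two_pi_I_mul_QR_castVec (N : ℕ) (w : (Fin n → ℤ) × (Fin n → ℤ)) :
    Complex.exp (2 * π * Complex.I * (N * (QR n (castVec n w) : ℂ))) = 1 := by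
  rw [Complex.exp_eq_one_iff]
  refine ⟨N * ∑ i, w.1 i * w.2 i, ?_⟩
  simp only [QR, castVec]
  push_cast
  ring

lemma planeWave_natCast_smul_eq_exp (N : ℕ) (p y : Fin n → ℝ) :
    planeWave ((N : ℝ) • p) y = Complex.exp (2 * π * Complex.I * N * (∑ i, p i * y i : ℝ)) := by
  rw [planeWave, smul_dotProduct, fourierChar_apply, dotProduct, smul_eq_mul]
  push_cast
  congr 1
  ring

lemma rho_castVec (w : (Fin n → ℤ) × (Fin n → ℤ)) (f : (Fin n → ℝ) → ℂ) (y : Fin n → ℝ) :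
    rho n N (castVec n w) (Complex.exp (π * Complex.I * (QR n (castVec n w) : ℂ))) f y =
      planeWave ((N : ℝ) • intVec w.2) y * f (y - intVec w.1) := by
  rw [planeWave_natCast_smul_eq_exp, rho, ← Complex.exp_nat_mul, ← Complex.exp_add]
  congr 2
  simp only [castVec, intVec_apply]
  ring

lemma rhoDualTest_castVec (w : (Fin n → ℤ) × (Fin n → ℤ)) (f : (Fin n → ℝ) → ℂ) (y : Fin n → ℝ) :
    rhoDualTest n N (castVec n w) (Complex.exp (π * Complex.I * (QR n (castVec n w) : ℂ))) f y =
      planeWave ((N : ℝ) • intVec w.2) y * f (y + intVec w.1) := by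
  rw [planeWave_natCast_smul_eq_exp, rhoDualTest, ← Complex.exp_nat_mul, ← Complex.exp_add,
    ← mul_one (Complex.exp (2 * π * Complex.I * N * _)), ← exp_two_pi_I_mul_QR_castVec N w,
    ← Complex.exp_add]
  congr 2
  simp only [castVec, intVec_apply]
  ring

/-- The point `-θ₁/N` around which the lattice supporting the distributions in `H_{N,θ}` is
based. -/
noncomputable def basePoint (N : ℕ) (θ : (Fin n → ℝ) × (Fin n → ℝ)) : Fin n → ℝ :=
  -((N : ℝ)⁻¹ • θ.1)

lemma exp_sigmaR_castVec (hN : N ≠ 0) (θ : (Fin n → ℝ) × (Fin n → ℝ))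
    (w : (Fin n → ℤ) × (Fin n → ℤ)) :
    Complex.exp (2 * π * Complex.I * (sigmaR n θ (castVec n w) : ℂ)) =
      planeWave θ.2 (intVec w.1) * planeWave ((N : ℝ) • intVec w.2) (basePoint N θ) := by
  rw [planeWave_smul_left, basePoint, smul_neg, smul_inv_smul₀ (Nat.cast_ne_zero.2 hN), planeWave,
    planeWave, ← Circle.coe_mul, ← AddChar.map_add_eq_mul, fourierChar_apply, dotProduct_neg]
  simp only [sigmaR, castVec, dotProduct, intVec_apply]
  push_cast
  congr 1
  ring

lemma Ppairing_eq_tsum_projectorTerm (hN : N ≠ 0) (θ : (Fin n → ℝ) × (Fin n → ℝ))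
    (f g : 𝓢(Fin n → ℝ, ℂ)) :
    Ppairing n N θ f g = ∑' w, projectorTerm N θ.2 (basePoint N θ) f g w := by
  refine tsum_congr fun w => ?_
  have hphase := exp_sigmaR_castVec hN θ (-w)
  have hsigma : sigmaR n θ (castVec n (-w)) = -sigmaR n θ (castVec n w) := by
    simp [sigmaR, castVec, sub_eq_add_neg, add_comm]
  rw [hsigma, Complex.ofReal_neg, mul_neg, ← neg_mul] at hphase
  simp only [rho_castVec, projectorTerm, hphase, schwartzMul_apply, compSubConstCLM_apply,
    Prod.fst_neg, Prod.snd_neg, map_neg, smul_neg, planeWave_neg_left]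
  simp only [mul_assoc]
  ring

variable {θ : (Fin n → ℝ) × (Fin n → ℝ)} {ν : 𝓢(Fin n → ℝ, ℂ) →L[ℂ] ℂ}
  {rhoT : (Fin n → ℝ) × (Fin n → ℝ) → ℂ → (𝓢(Fin n → ℝ, ℂ) →L[ℂ] 𝓢(Fin n → ℝ, ℂ))}

lemma mem_quasiPeriodicSet_iff (hN : N ≠ 0)
    (hrhoT : ∀ x ζ f z, rhoT x ζ f z = rhoDualTest n N x ζ (⇑f) z) :
    ν ∈ quasiPeriodicSet n N rhoT θ ↔ ∀ (q p : Fin n → ℤ) (f : 𝓢(Fin n → ℝ, ℂ)),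
      ν (planeWaveMul ((N : ℝ) • intVec p) (compSubConstCLM ℂ (-intVec q) f)) =
        planeWave θ.2 (intVec q) * planeWave ((N : ℝ) • intVec p) (basePoint N θ) * ν f := by
  have hact : ∀ (w : (Fin n → ℤ) × (Fin n → ℤ)) (f : 𝓢(Fin n → ℝ, ℂ)),
      rhoT (castVec n w) (Complex.exp (π * Complex.I * (QR n (castVec n w) : ℂ))) f =
        planeWaveMul ((N : ℝ) • intVec w.2) (compSubConstCLM ℂ (-intVec w.1) f) := fun w f => by
    ext y
    rw [hrhoT, rhoDualTest_castVec, planeWaveMul_apply, compSubConstCLM_apply, sub_neg_eq_add]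
  simp only [quasiPeriodicSet, Set.mem_ofPred_eq, hact, exp_sigmaR_castVec hN, Prod.forall]

theorem mem_quasiPeriodicSet_iff_exists_isDiracComb (hN : N ≠ 0)
    (hrhoT : ∀ x ζ f z, rhoT x ζ f z = rhoDualTest n N x ζ (⇑f) z) :
    ν ∈ quasiPeriodicSet n N rhoT θ ↔
      ∃ c, IsQuasiPeriodic N θ.2 c ∧ IsDiracComb (basePoint N θ) (N : ℝ)⁻¹ c ν := by
  rw [mem_quasiPeriodicSet_iff hN hrhoT]
  refine ⟨fun hν => ?_, fun ⟨c, hc, hν⟩ => hν.apply_planeWaveMul_compSubConst hN hc⟩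
  have heigen : IsPlaneWaveEigen N (basePoint N θ) ν := fun p f => by
    have hp := hν 0 p f
    rwa [map_zero, neg_zero, planeWave_zero_right, one_mul,
      show compSubConstCLM ℂ 0 f = f from SchwartzMap.ext fun y => by simp] at hp
  refine heigen.exists_isDiracComb hN fun q f => ?_
  have hq := hν q 0 f
  rwa [map_zero, smul_zero, planeWave_zero_left, mul_one, show ∀ h : 𝓢(Fin n → ℝ, ℂ),
    planeWaveMul 0 h = h from fun h => SchwartzMap.ext fun y => by
      rw [planeWaveMul_apply, planeWave_zero_left, one_mul]] at hq

end Heisenberg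

end

/-- `P_{N,θ}` maps `𝒮(ℝⁿ)` onto the space `H_{N,θ}` of quasi-periodic
distributions: for every Schwartz `f`, the tempered distribution `P_{N,θ}f` belongs to
`H_{N,θ}`, and every `ν ∈ H_{N,θ}` is of the form `P_{N,θ}f` for some Schwartz `f`. -/
theorem projector_surjective (n N : ℕ) (hN : 1 ≤ N) (θ : (Fin n → ℝ) × (Fin n → ℝ))
    (rhoT : (Fin n → ℝ) × (Fin n → ℝ) → ℂ →
      (SchwartzMap ((Fin n) → ℝ) ℂ →L[ℂ] SchwartzMap ((Fin n) → ℝ) ℂ))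
    (hrhoT : ∀ x ζ f z, rhoT x ζ f z = rhoDualTest n N x ζ (⇑f) z) :
    (∀ f : SchwartzMap ((Fin n) → ℝ) ℂ,
      ∃ ν ∈ quasiPeriodicSet n N rhoT θ,
        ∀ g : SchwartzMap ((Fin n) → ℝ) ℂ, ν g = Ppairing n N θ (⇑f) (⇑g)) ∧
    (∀ ν ∈ quasiPeriodicSet n N rhoT θ,
      ∃ f : SchwartzMap ((Fin n) → ℝ) ℂ,
        ∀ g : SchwartzMap ((Fin n) → ℝ) ℂ, ν g = Ppairing n N θ (⇑f) (⇑g)) := by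
  have hN' : N ≠ 0 := Nat.one_le_iff_ne_zero.1 hN
  have hcomb : ∀ f g : SchwartzMap (Fin n → ℝ) ℂ, Ppairing n N θ f g =
      ∑' k, combCoeff N θ.2 (basePoint N θ) f k * g (basePoint N θ + (N : ℝ)⁻¹ • intVec k) :=
    fun f g => by rw [Ppairing_eq_tsum_projectorTerm hN', tsum_projectorTerm _ _ hN']
  refine ⟨fun f => ?_, fun ν hν => ?_⟩
  · have hquasi := isQuasiPeriodic_combCoeff θ.2 (basePoint N θ) hN' f
    obtain ⟨B, hB⟩ := hquasi.exists_norm_le hN'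
    obtain ⟨ν, hν⟩ := exists_isDiracComb (basePoint N θ)
      (inv_ne_zero (Nat.cast_ne_zero (R := ℝ).2 hN')) hB
    exact ⟨ν, (mem_quasiPeriodicSet_iff_exists_isDiracComb hN' hrhoT).2 ⟨_, hquasi, hν⟩,
      fun g => by rw [hcomb, (hν g).tsum_eq]⟩
  · obtain ⟨c, hquasi, hν⟩ := (mem_quasiPeriodicSet_iff_exists_isDiracComb hN' hrhoT).1 hν
    obtain ⟨f, rfl⟩ := hquasi.exists_combCoeff_eq (basePoint N θ) hN'
    exact ⟨f, fun g => by rw [hcomb, (hν g).tsum_eq]⟩
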